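/- For all x, y ∈ (0,1), one has 1 + j(y)·x/ln(1-x) + k(y)·(1-x)/ln(x) ≥ 0, and equality holds if and only if x = y. -/

import Mathlib

/-!
The function `h` is strictly convex on `(0,1)` with `h < 0` and `h' < 0` there. Writing `l = log t`,
its second derivative is `((1 + t) l + 2 (1 - t)) / (t² l³)`, which is positive because `l < 0` and
`log t < -2 (1 - t) / (1 + t)` for `t < 1` (`two_mul_one_sub_add_log_neg`).

Since `g(y) = h(1 - y)`, the function `g` is strictly convex too, with `g < 0` and `g' > 0`.
Hence `W(y) > 0`, and `j(y)` and `k(y)` are both positive, so `x ↦ j(y) g(x) + k(y) h(x)` lies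
strictly above its tangent at `y` away from `y`. By the choice of `j(y)` and `k(y)`, that tangent
is the constant `-1`.
-/

noncomputable def gFun (y : ℝ) : ℝ := y / Real.log (1 - y)

noncomputable def hFun (y : ℝ) : ℝ := (1 - y) / Real.log y

/-- Wronskian of `g` and `h`. -/
noncomputable def WFun (y : ℝ) : ℝ := gFun y * deriv hFun y - deriv gFun y * hFun y

noncomputable def jFun (y : ℝ) : ℝ := -deriv hFun y / WFun y

noncomputable def kFun (y : ℝ) : ℝ := deriv gFun y / WFun y

open Set

lemma two_mul_one_sub_add_log_neg {t : ℝ} (ht : t ∈ Ioo (0 : ℝ) 1) :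
    (1 + t) * Real.log t + 2 * (1 - t) < 0 := by
  obtain ⟨h0, h1⟩ := ht
  -- The bound `2 s / (s + 2) < log (1 + s)` at `s = 1 / t - 1`, where `log (1 + s) = -log t`.
  have h := Real.lt_log_one_add_of_pos (x := (1 - t) / t) (div_pos (by linarith) h0)
  have e1 : 1 + (1 - t) / t = t⁻¹ := by field_simp; ring
  have e2 : 2 * ((1 - t) / t) / ((1 - t) / t + 2) = 2 * (1 - t) / (1 + t) := by
    have : (1 - t) / t + 2 = (1 + t) / t := by field_simp; ring
    rw [this]
    field_simp
  rw [e1, e2, Real.log_inv, div_lt_iff₀ (by linarith)] at h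
  linarith

lemma mul_log_add_one_sub_pos {t : ℝ} (ht : t ∈ Ioo (0 : ℝ) 1) :
    0 < t * Real.log t + (1 - t) := by
  obtain ⟨h0, h1⟩ := ht
  have h := Real.log_lt_sub_one_of_pos (inv_pos.2 h0) (by simpa using h1.ne)
  rw [Real.log_inv] at h
  have := mul_lt_mul_of_pos_left h h0
  rw [mul_sub, mul_inv_cancel₀ h0.ne'] at this
  linarith

/-- The derivative of `hFun` on `(0,1)`, in closed form. -/
noncomputable def hFunDeriv (t : ℝ) : ℝ := -(t * Real.log t + (1 - t)) / (t * Real.log t ^ 2)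

lemma hasDerivAt_hFun {t : ℝ} (ht : t ∈ Ioo (0 : ℝ) 1) : HasDerivAt hFun (hFunDeriv t) t := by
  have h0 : t ≠ 0 := ht.1.ne'
  have hl : Real.log t ≠ 0 := (Real.log_neg ht.1 ht.2).ne
  have h := ((hasDerivAt_id t).const_sub 1).div (Real.hasDerivAt_log h0) hl
  refine h.congr_deriv ?_
  simp only [hFunDeriv, id]
  field_simp
  ring

lemma hFunDeriv_neg {t : ℝ} (ht : t ∈ Ioo (0 : ℝ) 1) : hFunDeriv t < 0 := by
  have hl : Real.log t ≠ 0 := (Real.log_neg ht.1 ht.2).ne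
  have h0 := ht.1
  exact div_neg_of_neg_of_pos (neg_lt_zero.2 (mul_log_add_one_sub_pos ht)) (by positivity)

lemma hFun_neg {t : ℝ} (ht : t ∈ Ioo (0 : ℝ) 1) : hFun t < 0 :=
  div_neg_of_pos_of_neg (sub_pos.2 ht.2) (Real.log_neg ht.1 ht.2)

lemma hasDerivAt_hFunDeriv {t : ℝ} (ht : t ∈ Ioo (0 : ℝ) 1) :
    HasDerivAt hFunDeriv
      (((1 + t) * Real.log t + 2 * (1 - t)) / (t ^ 2 * Real.log t ^ 3)) t := by
  have h0 : t ≠ 0 := ht.1.ne'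
  have hl : Real.log t ≠ 0 := (Real.log_neg ht.1 ht.2).ne
  have hlog := Real.hasDerivAt_log h0
  have hid := hasDerivAt_id t
  have h := (((hid.mul hlog).add (hid.const_sub 1)).neg).div (hid.mul (hlog.pow 2))
    (mul_ne_zero h0 (pow_ne_zero 2 hl))
  refine h.congr_deriv ?_
  simp
  field_simp
  ring

lemma strictConvexOn_hFun : StrictConvexOn ℝ (Ioo 0 1) hFun := by
  refine StrictMonoOn.strictConvexOn_of_deriv (convex_Ioo 0 1)
    (fun t ht => (hasDerivAt_hFun ht).continuousAt.continuousWithinAt) ?_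
  rw [interior_Ioo]
  have hmono : StrictMonoOn hFunDeriv (Ioo 0 1) := by
    refine strictMonoOn_of_deriv_pos (convex_Ioo 0 1)
      (fun t ht => (hasDerivAt_hFunDeriv ht).continuousAt.continuousWithinAt) fun t ht => ?_
    rw [interior_Ioo] at ht
    rw [(hasDerivAt_hFunDeriv ht).deriv]
    exact div_pos_of_neg_of_neg (two_mul_one_sub_add_log_neg ht)
      (mul_neg_of_pos_of_neg (pow_pos ht.1 2)
        (Odd.pow_neg (by decide) (Real.log_neg ht.1 ht.2)))
  exact hmono.congr fun t ht => (hasDerivAt_hFun ht).deriv.symm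

lemma hFun_tangent_lt {x y : ℝ} (hx : x ∈ Ioo (0 : ℝ) 1) (hy : y ∈ Ioo (0 : ℝ) 1) (hxy : x ≠ y) :
    hFun y + hFunDeriv y * (x - y) < hFun x := by
  rcases lt_or_gt_of_ne hxy with h | h
  · have := strictConvexOn_hFun.slope_lt_of_hasDerivAt hx hy h (hasDerivAt_hFun hy)
    rw [slope_def_field, div_lt_iff₀ (by linarith)] at this
    linarith
  · have := strictConvexOn_hFun.lt_slope_of_hasDerivAt hy hx h (hasDerivAt_hFun hy)
    rw [slope_def_field, lt_div_iff₀ (by linarith)] at this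
    linarith

lemma gFun_eq (y : ℝ) : gFun y = hFun (1 - y) := by
  simp [gFun, hFun]

lemma one_sub_mem {y : ℝ} (hy : y ∈ Ioo (0 : ℝ) 1) : 1 - y ∈ Ioo (0 : ℝ) 1 :=
  ⟨sub_pos.2 hy.2, by linarith [hy.1]⟩

lemma deriv_gFun {y : ℝ} (hy : y ∈ Ioo (0 : ℝ) 1) : deriv gFun y = -hFunDeriv (1 - y) := by
  rw [funext gFun_eq, deriv_comp_const_sub, (hasDerivAt_hFun (one_sub_mem hy)).deriv]

/-- For all `x, y ∈ (0,1)`, `1 + j(y)·x/ln(1-x) + k(y)·(1-x)/ln(x) ≥ 0`,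
with equality iff `x = y`. -/
theorem stmt_12 (x y : ℝ) (hx : x ∈ Set.Ioo (0 : ℝ) 1) (hy : y ∈ Set.Ioo (0 : ℝ) 1) :
    1 + jFun y * x / Real.log (1 - x) + kFun y * (1 - x) / Real.log x ≥ 0 ∧
    (1 + jFun y * x / Real.log (1 - x) + kFun y * (1 - x) / Real.log x = 0 ↔ x = y) := by
  rw [mul_div_assoc, mul_div_assoc, ← gFun, ← hFun]
  have hg' := deriv_gFun hy
  have hh' := (hasDerivAt_hFun hy).deriv
  have hg'pos : 0 < deriv gFun y := hg' ▸ neg_pos.2 (hFunDeriv_neg (one_sub_mem hy))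
  have hh'neg : deriv hFun y < 0 := hh' ▸ hFunDeriv_neg hy
  have hgneg : gFun y < 0 := gFun_eq y ▸ hFun_neg (one_sub_mem hy)
  have hW : 0 < WFun y := by
    have h1 := mul_pos_of_neg_of_neg hgneg hh'neg
    have h2 := mul_neg_of_pos_of_neg hg'pos (hFun_neg hy)
    unfold WFun
    linarith
  have hj : 0 < jFun y := div_pos (neg_pos.2 hh'neg) hW
  have hk : 0 < kFun y := div_pos hg'pos hW
  have hval : jFun y * gFun y + kFun y * hFun y = -1 := by
    have hne := hW.ne'
    unfold jFun kFun
    field_simp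
    unfold WFun
    ring
  have hcrit : jFun y * deriv gFun y + kFun y * deriv hFun y = 0 := by
    unfold jFun kFun
    ring
  have hpos : x ≠ y → 0 < 1 + jFun y * gFun x + kFun y * hFun x := by
    intro hxy
    have h1 := hFun_tangent_lt (one_sub_mem hx) (one_sub_mem hy) (fun h => hxy (by linarith))
    rw [← gFun_eq, ← gFun_eq, ← neg_neg (hFunDeriv (1 - y)), ← hg'] at h1
    have h2 := hFun_tangent_lt hx hy hxy
    rw [← hh'] at h2
    have h3 := mul_lt_mul_of_pos_left h1 hj
    have h4 := mul_lt_mul_of_pos_left h2 hk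
    linear_combination h3 + h4 - hval - (x - y) * hcrit
  have hzero : x = y → 1 + jFun y * gFun x + kFun y * hFun x = 0 := by
    rintro rfl
    linarith
  refine ⟨?_, fun h => by_contra fun hxy => (hpos hxy).ne' h, hzero⟩
  by_cases hxy : x = y
  · exact (hzero hxy).ge
  · exact (hpos hxy).le
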